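/- With preference lists that may contain ties, let M be a popular matching. Then M is well-formed: for all i with 1 ≤ i ≤ k the matching M_i = M ∩ E[G_i] is a maximum matching of G_i, and every applicant x is matched in M to a job in f(x) ∪ s(x). -/

import Mathlib

/-!
Suppose the popular matching `M` violates the conclusion. Let `i` be minimal with `M ∩ E[G_i]`
not maximum, or, if there is no such `i`, let `i` be the category of an applicant holding no job
of `f x ∪ s x`. Since the earlier restrictions are maximum, every critical job of an earlier
graph is held along an `f`-edge, so an applicant of category at most `i` without an `f`-job
strictly gains from receiving one. In both cases there are an applicant `x₀` of category exactly
`i`, a job `q` it strictly prefers to its present one, and a matching of `G_i` that leaves `q`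
free and serves everyone whom `M` serves in `G_i` (`exists_augmentation`, and the
Mendelsohn–Dulmage theorem `exists_maxMatching_cover`).

Following this matching, applicants holding `f`-jobs are shifted to other, equally good,
`f`-jobs until `q` is free for `x₀`, at the cost of evicting at most one applicant `z`
(`chain_shift`). If nobody is evicted or `z` has category above `i`, the new matching is more
popular. Otherwise `z` had no `f`-job, and it is promoted to one in the same way, by shifting
inside `G_{c-1}`, where `c` is the category of `z`: its `f`-jobs are non-critical there. Someone
else may be evicted, and if that applicant has category below `c` it had no `f`-job either and
is promoted in turn. Categories decrease, so this stops, with at most one loser, who weighs no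
more than the applicant promoted last; `x₀` gains besides. The only delicate case is that the
loser is `x₀` itself; then either a third applicant has gained, or `x₀` can be given back its old
job (`exists_morePopular_of_unmatched`).
-/

/-- `M` is a matching of the bipartite graph with edge relation `E`. -/
def IsMatchingOn {A J : Type*} (E : A → J → Prop) (M : A → Option J) : Prop :=
  (∀ x p, M x = some p → E x p) ∧ ∀ x y p, M x = some p → M y = some p → x = y

/-- The size (number of matched applicants, i.e. edges) of a matching. -/
def msize {A J : Type*} [Fintype A] (M : A → Option J) : ℕ :=
  Finset.card (Finset.univ.filter (fun x => (M x).isSome))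

/-- `M` is a maximum matching of the graph with edge relation `E`. -/
def IsMaxMatchingOn {A J : Type*} [Fintype A] (E : A → J → Prop)
    (M : A → Option J) : Prop :=
  IsMatchingOn E M ∧ ∀ M', IsMatchingOn E M' → msize M' ≤ msize M

/-- A job `p` is critical if it is matched in every maximum matching. -/
def CriticalJob {A J : Type*} [Fintype A] (E : A → J → Prop) (p : J) : Prop :=
  ∀ M, IsMaxMatchingOn E M → ∃ x, M x = some p

/-- An applicant `x` is critical if it is matched in every maximum matching. -/
def CriticalApp {A J : Type*} [Fintype A] (E : A → J → Prop) (x : A) : Prop :=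
  ∀ M, IsMaxMatchingOn E M → (M x).isSome

/-- The edge relation of the graph `G_i`: edges between applicants of category at
most `i` and the jobs in their sets `f x`. -/
def Gedge {A J : Type*} (cat : A → ℕ) (f : A → Finset J) (i : ℕ)
    (x : A) (p : J) : Prop :=
  cat x ≤ i ∧ p ∈ f x

/-- The rank of the job (if any) that applicant `x` receives in matching `M`;
`⊤` means `x` is unmatched (worse than any job on the list). -/
def mrank {A J : Type*} (r : A → J → ℕ∞) (M : A → Option J) (x : A) : ℕ∞ :=
  (M x).elim ⊤ (r x)

/-- `M` is a matching of the instance: every applicant is assigned at most one job,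
along an edge of `H` (i.e. a job on its list, `r x p < ⊤`), and every job is assigned
to at most one applicant. -/
def IsMatching {A J : Type*} (r : A → J → ℕ∞) (M : A → Option J) : Prop :=
  (∀ x p, M x = some p → r x p < ⊤) ∧ ∀ x y p, M x = some p → M y = some p → x = y

open Classical in
/-- Satisfaction of `M₁` with respect to `M₂`: total weight of applicants who prefer
`M₁` to `M₂` minus the total weight of those who prefer `M₂` to `M₁`. -/
noncomputable def satisfaction {A J : Type*} [Fintype A]
    (r : A → J → ℕ∞) (w : A → ℚ) (M₁ M₂ : A → Option J) : ℚ :=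
  (∑ x, if mrank r M₁ x < mrank r M₂ x then w x else 0)
    - ∑ x, if mrank r M₂ x < mrank r M₁ x then w x else 0

/-- `M₁` is more popular than `M₂`. -/
def MorePopular {A J : Type*} [Fintype A]
    (r : A → J → ℕ∞) (w : A → ℚ) (M₁ M₂ : A → Option J) : Prop :=
  0 < satisfaction r w M₁ M₂

/-- A matching is popular if no matching is more popular than it. -/
def Popular {A J : Type*} [Fintype A]
    (r : A → J → ℕ∞) (w : A → ℚ) (M : A → Option J) : Prop :=
  IsMatching r M ∧ ∀ M', IsMatching r M' → ¬ MorePopular r w M' M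

/-- The restriction `M ∩ E[G_i]` of a matching `M` to the edges of `G_i`. -/
def restrictM {A J : Type*} [DecidableEq J] (cat : A → ℕ) (f : A → Finset J)
    (i : ℕ) (M : A → Option J) : A → Option J :=
  fun x => (M x).bind fun p => if cat x ≤ i ∧ p ∈ f x then some p else none

/-! ### Matchings of a bipartite graph -/

/-- No job is held by two different applicants. -/
def JobInj {A J : Type*} (N : A → Option J) : Prop :=
  ∀ x y p, N x = some p → N y = some p → x = y

open Classical in
theorem JobInj.update_some {A J : Type*} {N : A → Option J} (hN : JobInj N) (y : A) (q : J)
    (hq : ∀ x, N x ≠ some q) : JobInj (Function.update N y (some q)) := by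
  intro a b p ha hb
  by_cases hay : a = y <;> by_cases hby : b = y
  · rw [hay, hby]
  · subst hay
    rw [Function.update_self] at ha
    rw [Function.update_of_ne hby] at hb
    exact absurd (hb.trans ha.symm) (hq b)
  · subst hby
    rw [Function.update_self] at hb
    rw [Function.update_of_ne hay] at ha
    exact absurd (ha.trans hb.symm) (hq a)
  · rw [Function.update_of_ne hay] at ha
    rw [Function.update_of_ne hby] at hb
    exact hN a b p ha hb

open Classical in
theorem JobInj.update_none {A J : Type*} {N : A → Option J} (hN : JobInj N) (y : A) :
    JobInj (Function.update N y none) := by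
  intro a b p ha hb
  by_cases hay : a = y
  · subst hay; simp at ha
  by_cases hby : b = y
  · subst hby; simp at hb
  rw [Function.update_of_ne hay] at ha
  rw [Function.update_of_ne hby] at hb
  exact hN a b p ha hb

theorem exists_maxMatching {A J : Type*} [Fintype A] [Finite J] (E : A → J → Prop) :
    ∃ M, IsMaxMatchingOn E M := by
  classical
  obtain ⟨M, hM, hmax⟩ := Set.exists_max_image {M : A → Option J | IsMatchingOn E M} msize
    (Set.toFinite _) ⟨fun _ => none, by simp [IsMatchingOn]⟩
  exact ⟨M, hM, hmax⟩

/-- Mendelsohn–Dulmage: the applicants covered by a matching `N` can be covered by a maximum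
matching using only jobs of a given maximum matching `L`. Among the maximum matchings on jobs
of `L`, one agreeing with `N` as often as possible does this: an applicant covered by `N` but
not by it could take its `N`-job, which either enlarges the matching or increases agreement. -/
theorem exists_maxMatching_cover {A J : Type*} [Fintype A] [Finite J] {E : A → J → Prop}
    {N L : A → Option J} (hN : IsMatchingOn E N) (hL : IsMaxMatchingOn E L) :
    ∃ P, IsMaxMatchingOn E P ∧ (∀ x, (N x).isSome → (P x).isSome) ∧
      ∀ x p, P x = some p → ∃ y, L y = some p := by
  classical
  obtain ⟨P, ⟨hP, hPL⟩, hbest⟩ := Set.exists_max_image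
    {P : A → Option J | IsMaxMatchingOn E P ∧ ∀ x p, P x = some p → ∃ y, L y = some p}
    (fun P => (Finset.univ.filter fun x => N x ≠ none ∧ P x = N x).card)
    (Set.toFinite _) ⟨L, hL, fun x p h => ⟨x, h⟩⟩
  refine ⟨P, hP, fun x hx => ?_, hPL⟩
  by_contra hPx
  have hPx : P x = none := by simpa using hPx
  obtain ⟨p, hp⟩ := Option.isSome_iff_exists.1 hx
  by_cases hfree : ∃ x', P x' = some p
  · obtain ⟨x', hx'⟩ := hfree
    have hne : x' ≠ x := by rintro rfl; simp [hPx] at hx'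
    have hNx' : N x' ≠ some p := fun h => hne (hN.2 _ _ _ h hp)
    set Q := Function.update (Function.update P x' none) x (some p) with hQ
    have hQx : Q x = some p := by simp [hQ]
    have hQx' : Q x' = none := by simp [hQ, Function.update_of_ne hne]
    have hQo : ∀ z, z ≠ x → z ≠ x' → Q z = P z := fun z h1 h2 => by
      simp [hQ, Function.update_of_ne h1, Function.update_of_ne h2]
    have hQsz : msize Q = msize P := by
      have : Finset.univ.filter (fun z => (Q z).isSome)
          = insert x ((Finset.univ.filter fun z => (P z).isSome).erase x') := by
        ext z
        by_cases h1 : z = x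
        · subst h1; simp [hQx]
        by_cases h2 : z = x'
        · subst h2; simp [hQx', h1]
        simp [h1, h2, hQo z h1 h2]
      unfold msize
      rw [this, Finset.card_insert_of_notMem (by simp [hPx]),
        Finset.card_erase_add_one (by simp [hx'])]
    have hQm : IsMatchingOn E Q := by
      refine ⟨fun z t hz => ?_, ?_⟩
      · by_cases h1 : z = x
        · subst h1
          rw [hQx] at hz
          cases hz
          exact hN.1 _ _ hp
        by_cases h2 : z = x'
        · subst h2; simp [hQx'] at hz
        exact hP.1.1 z t (hQo z h1 h2 ▸ hz)
      · refine JobInj.update_some (JobInj.update_none hP.1.2 x') x p fun z hz => ?_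
        by_cases h2 : z = x'
        · subst h2; simp at hz
        rw [Function.update_of_ne h2] at hz
        exact h2 (hP.1.2 _ _ _ hz hx')
    have := hbest Q ⟨⟨hQm, fun M' h => hQsz ▸ hP.2 M' h⟩, fun z t hz => by
      by_cases h1 : z = x
      · subst h1
        rw [hQx] at hz
        cases hz
        exact hPL _ _ hx'
      by_cases h2 : z = x'
      · subst h2; simp [hQx'] at hz
      exact hPL z t (hQo z h1 h2 ▸ hz)⟩
    refine absurd this (not_le.2 (Finset.card_lt_card ?_))
    rw [Finset.ssubset_iff_of_subset]
    · exact ⟨x, by simp [hp, hQx], by simp [hPx, hp]⟩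
    · intro z hz
      simp only [Finset.mem_filter, Finset.mem_univ, true_and] at hz ⊢
      refine ⟨hz.1, ?_⟩
      have h1 : z ≠ x := by rintro rfl; simp [hPx, hp] at hz
      have h2 : z ≠ x' := by rintro rfl; exact hNx' (hz.2 ▸ hx')
      rw [hQo z h1 h2, hz.2]
  · push Not at hfree
    have hm : IsMatchingOn E (Function.update P x (some p)) := by
      refine ⟨fun z t hz => ?_, JobInj.update_some hP.1.2 x p hfree⟩
      by_cases h1 : z = x
      · subst h1
        rw [Function.update_self] at hz
        cases hz
        exact hN.1 _ _ hp
      rw [Function.update_of_ne h1] at hz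
      exact hP.1.1 z t hz
    have := hP.2 _ hm
    refine absurd this (not_le.2 (Finset.card_lt_card ?_))
    rw [Finset.ssubset_iff_of_subset]
    · exact ⟨x, by simp, by simp [hPx]⟩
    · intro z hz
      by_cases h1 : z = x
      · subst h1; simp
      · simpa [Function.update_of_ne h1] using hz

/-- Freeing the job `q` in the assignment `N`. The assignment `P` leaves `q` free and serves
every applicant with `Cov`. The holder of `q` moves to its `P`-job, the holder of that job
moves to its own `P`-job, and so on, until a job is reached which is free (first alternative)
or held by an applicant `z` without `Cov`, who is evicted (second alternative). If someone is
evicted, then no job outside `N` gets used. -/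
theorem chain_shift {A J : Type*} [Fintype A] (Cov : A → Prop) (N : A → Option J)
    (hN : JobInj N) (n : ℕ) : ∀ (P : A → Option J) (q : J),
    Set.ncard {x | N x ≠ P x} = n → JobInj P → (∀ x, Cov x → ∃ p, P x = some p) →
    (∀ x, P x ≠ some q) →
    ∃ N' : A → Option J, JobInj N' ∧ (∀ x, N' x ≠ some q) ∧
      ((∀ x, N' x = N x ∨ (Cov x ∧ N' x = P x)) ∨
       ∃ z, ¬ Cov z ∧ N z ≠ none ∧ N' z = none ∧
        (∀ x, x ≠ z → (N' x = N x ∨ (Cov x ∧ N' x = P x))) ∧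
        (∀ x p, N' x = some p → ∃ y, N y = some p) ∧ ∃ y, N y = some q) := by
  classical
  induction n using Nat.strong_induction_on with
  | _ n ih =>
    intro P q hn hP hcov hq
    by_cases hheld : ∃ z, N z = some q
    swap
    · push Not at hheld
      exact ⟨N, hN, hheld, Or.inl fun x => Or.inl rfl⟩
    obtain ⟨z, hz⟩ := hheld
    by_cases hcz : Cov z
    swap
    · refine ⟨Function.update N z none, hN.update_none z, ?_, Or.inr ⟨z, hcz, by simp [hz],
        by simp, fun x hx => Or.inl (Function.update_of_ne hx _ _), ?_, z, hz⟩⟩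
      · intro x hx
        by_cases h : x = z
        · subst h; simp at hx
        · rw [Function.update_of_ne h] at hx
          exact h (hN _ _ _ hx hz)
      · intro x p hx
        by_cases h : x = z
        · subst h; simp at hx
        · rw [Function.update_of_ne h] at hx
          exact ⟨x, hx⟩
    obtain ⟨q₁, hq₁⟩ := hcov z hcz
    have hqq : q ≠ q₁ := by rintro rfl; exact hq z hq₁
    -- Giving `q` to `z` in `P` makes `P` agree with `N` at `z`, and leaves `q₁` free.
    set P₁ := Function.update P z (some q) with hP₁
    have hP₁z : P₁ z = some q := by simp [hP₁]
    have hP₁o : ∀ x, x ≠ z → P₁ x = P x := fun x hx => Function.update_of_ne hx _ _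
    have hlt : Set.ncard {x | N x ≠ P₁ x} < n := by
      rw [← hn]
      refine Set.ncard_lt_ncard ?_ (Set.toFinite _)
      rw [Set.ssubset_iff_of_subset]
      · exact ⟨z, by simp [hz, hq₁, hqq], by simp [hz, hP₁z]⟩
      · intro x hx
        have hxz : x ≠ z := by rintro rfl; simp [hz, hP₁z] at hx
        simpa [hP₁o x hxz] using hx
    obtain ⟨N', hN', hN'q, hor⟩ := ih _ hlt P₁ q₁ rfl (hP.update_some z q hq)
      (fun x hx => by
        by_cases h : x = z
        · exact ⟨q, h ▸ hP₁z⟩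
        · rw [hP₁o x h]; exact hcov x hx)
      (fun x hx => by
        by_cases h : x = z
        · subst h; rw [hP₁z] at hx; exact hqq (Option.some.inj hx)
        · rw [hP₁o x h] at hx; exact h (hP _ _ _ hx hq₁))
    have hN'z : N' z = some q := by
      rcases hor with h | ⟨v, hv, -, -, h, -⟩
      · rcases h z with h | ⟨-, h⟩
        · rw [h, hz]
        · rw [h, hP₁z]
      · rcases h z (by rintro rfl; exact hv hcz) with h | ⟨-, h⟩
        · rw [h, hz]
        · rw [h, hP₁z]
    have hself : Function.update N' z (some q₁) z = some q₁ := by simp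
    have hoth : ∀ x, x ≠ z → Function.update N' z (some q₁) x = N' x :=
      fun x hx => Function.update_of_ne hx _ _
    refine ⟨Function.update N' z (some q₁), hN'.update_some z q₁ hN'q, ?_, ?_⟩
    · intro x hx
      by_cases h : x = z
      · subst h; rw [hself] at hx; exact hqq (Option.some.inj hx).symm
      · rw [hoth x h] at hx; exact h (hN' _ _ _ hx hN'z)
    · rcases hor with h | ⟨v, hv, hv1, hv2, h, hjobs, hq₁N⟩
      · left
        intro x
        by_cases hx : x = z
        · subst hx; exact Or.inr ⟨hcz, by rw [hself, hq₁]⟩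
        · rw [hoth x hx, ← hP₁o x hx]; exact h x
      · right
        have hvz : v ≠ z := by rintro rfl; exact hv hcz
        refine ⟨v, hv, hv1, by rw [hoth v hvz, hv2], fun x hxv => ?_, fun x p hx => ?_, z, hz⟩
        · by_cases hx : x = z
          · subst hx; exact Or.inr ⟨hcz, by rw [hself, hq₁]⟩
          · rw [hoth x hx, ← hP₁o x hx]; exact h x hxv
        · by_cases hxz : x = z
          · subst hxz
            rw [hself] at hx
            rw [← hx]; exact hq₁N
          · rw [hoth x hxz] at hx; exact hjobs x p hx

/-! ### Weighted comparison of assignments -/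

/-- If everyone outside `L` is at least as well off in `N` as in `M`, everyone in `G` is
strictly better off, and `G` outweighs `L`, then `N` is more popular than `M`. -/
theorem morePopular_of_sets {A J : Type*} [Fintype A] (r : A → J → ℕ∞) (w : A → ℚ)
    (hw : ∀ x, 0 ≤ w x) (N M : A → Option J) (G L : Finset A)
    (hL : ∀ x, x ∉ L → mrank r N x ≤ mrank r M x)
    (hG : ∀ x ∈ G, mrank r N x < mrank r M x)
    (hlt : ∑ x ∈ L, w x < ∑ x ∈ G, w x) : MorePopular r w N M := by
  classical
  unfold MorePopular satisfaction
  have h1 : ∑ x ∈ G, w x ≤ ∑ x, if mrank r N x < mrank r M x then w x else 0 := by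
    rw [← Finset.sum_filter]
    exact Finset.sum_le_sum_of_subset_of_nonneg (fun x hx => by simpa using hG x hx)
      fun x _ _ => hw x
  have h2 : (∑ x, if mrank r M x < mrank r N x then w x else 0) ≤ ∑ x ∈ L, w x := by
    rw [← Finset.sum_filter]
    refine Finset.sum_le_sum_of_subset_of_nonneg (fun x hx => ?_) fun x _ _ => hw x
    by_contra hxL
    exact absurd (hL x hxL) (not_le.2 (by simpa using hx))
  have h3 := lt_of_le_of_lt h2 (lt_of_lt_of_le hlt h1)
  convert sub_pos.2 h3

/-! ### Restrictions to the graphs of first jobs -/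

theorem restrictM_eq_some {A J : Type*} [DecidableEq J] {cat : A → ℕ} {f : A → Finset J}
    {i : ℕ} {M : A → Option J} {x : A} {p : J} :
    restrictM cat f i M x = some p ↔ M x = some p ∧ cat x ≤ i ∧ p ∈ f x := by
  unfold restrictM
  cases h : M x with
  | none => simp
  | some q =>
    simp only [Option.bind_some]
    split_ifs with hc
    · constructor
      · intro h'; cases h'; exact ⟨rfl, hc⟩
      · intro h'; exact h'.1
    · constructor
      · intro h'; cases h'
      · rintro ⟨h', h''⟩; cases h'; exact absurd h'' hc

theorem restrictM_isSome {A J : Type*} [DecidableEq J] {cat : A → ℕ} {f : A → Finset J}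
    {i : ℕ} {M : A → Option J} {x : A} :
    (restrictM cat f i M x).isSome ↔ ∃ p, M x = some p ∧ cat x ≤ i ∧ p ∈ f x := by
  simp [Option.isSome_iff_exists, restrictM_eq_some]

theorem restrictM_isMatchingOn {A J : Type*} [DecidableEq J] (cat : A → ℕ) (f : A → Finset J)
    (i : ℕ) {M : A → Option J} (hM : JobInj M) :
    IsMatchingOn (Gedge cat f i) (restrictM cat f i M) :=
  ⟨fun _ _ h => (restrictM_eq_some.1 h).2,
    fun x y p h h' => hM x y p (restrictM_eq_some.1 h).1 (restrictM_eq_some.1 h').1⟩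

/-- If the restriction of `M` to `G_j` is maximum, then a critical job of `G_j` is held in `M`
along an edge of `G_j`; so an applicant holding it has it as an `f`-job. -/
theorem mem_f_of_critical {A J : Type*} [Fintype A] [DecidableEq J] {cat : A → ℕ}
    {f : A → Finset J} {j : ℕ} {M : A → Option J} (hM : JobInj M)
    (hmax : IsMaxMatchingOn (Gedge cat f j) (restrictM cat f j M)) {x : A} {p : J}
    (hx : M x = some p) (hp : CriticalJob (Gedge cat f j) p) : p ∈ f x := by
  obtain ⟨y, hy⟩ := hp _ hmax
  obtain ⟨hy, -, hf⟩ := restrictM_eq_some.1 hy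
  exact hM _ _ _ hx hy ▸ hf

theorem mrank_some {A J : Type*} {r : A → J → ℕ∞} {M : A → Option J} {x : A} {p : J}
    (h : M x = some p) : mrank r M x = r x p := by simp [mrank, h]

theorem mrank_congr {A J : Type*} {r : A → J → ℕ∞} {M N : A → Option J} {x : A}
    (h : N x = M x) : mrank r N x = mrank r M x := by simp [mrank, h]

/-- `f x` consists of the best jobs on the list of `x` that are non-critical in all earlier
graphs. -/
def FirstSpec {A J : Type*} [Fintype A] (r : A → J → ℕ∞) (cat : A → ℕ) (f : A → Finset J) :
    Prop :=
  ∀ x p, p ∈ f x ↔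
    r x p < ⊤ ∧ (∀ j < cat x, ¬ CriticalJob (Gedge cat f j) p) ∧
    ∀ q, r x q < ⊤ → (∀ j < cat x, ¬ CriticalJob (Gedge cat f j) q) → r x p ≤ r x q

theorem FirstSpec.rank_eq {A J : Type*} [Fintype A] {r : A → J → ℕ∞} {cat : A → ℕ}
    {f : A → Finset J} (hf : FirstSpec r cat f) {x : A} {p q : J} (hp : p ∈ f x)
    (hq : q ∈ f x) : r x p = r x q := by
  have hp := (hf x p).1 hp
  have hq := (hf x q).1 hq
  exact le_antisymm (hp.2.2 q hq.1 hq.2.1) (hq.2.2 p hp.1 hp.2.1)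

/-- An applicant who holds no `f`-job in `M` would strictly gain from an `f`-job: it can hold
no critical job of an earlier graph. -/
theorem FirstSpec.rank_lt {A J : Type*} [Fintype A] [DecidableEq J] {r : A → J → ℕ∞}
    {cat : A → ℕ} {f : A → Finset J} (hf : FirstSpec r cat f) {M : A → Option J}
    (hM : IsMatching r M) {x : A}
    (hmax : ∀ j < cat x, IsMaxMatchingOn (Gedge cat f j) (restrictM cat f j M))
    (hx : ∀ p, M x = some p → p ∉ f x) {q : J} (hq : q ∈ f x) : r x q < mrank r M x := by
  have hq' := (hf x q).1 hq
  cases h : M x with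
  | none => simpa [mrank, h] using hq'.1
  | some p =>
    rw [mrank_some h]
    have hnc : ∀ j < cat x, ¬ CriticalJob (Gedge cat f j) p := fun j hj hc =>
      hx p h (mem_f_of_critical hM.2 (hmax j hj) h hc)
    by_contra hle
    exact hx p h ((hf x p).2 ⟨hM.1 _ _ h, hnc, fun t ht htc =>
      (not_lt.1 hle).trans (hq'.2.2 t ht htc)⟩)

/-- A job listed by `x` only, such as its last resort, is critical in no graph before the
category of `x`. -/
theorem not_critical_private {A J : Type*} [Fintype A] [Finite J] {r : A → J → ℕ∞}
    {cat : A → ℕ} {f : A → Finset J} (hf : FirstSpec r cat f) {x : A} {p : J}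
    (hp : ∀ y, r y p < ⊤ → y = x) {j : ℕ} (hj : j < cat x) :
    ¬ CriticalJob (Gedge cat f j) p := by
  intro hc
  obtain ⟨N, hN⟩ := exists_maxMatching (Gedge cat f j)
  obtain ⟨y, hy⟩ := hc N hN
  have hE := hN.1.1 _ _ hy
  have := hp y ((hf y p).1 hE.2).1
  subst this
  exact absurd hE.1 (not_le.2 hj)

theorem FirstSpec.nonempty {A J : Type*} [Fintype A] [Finite J] {r : A → J → ℕ∞}
    {cat : A → ℕ} {f : A → Finset J} (hf : FirstSpec r cat f) {x : A} {p : J}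
    (hpr : r x p < ⊤) (hp : ∀ y, r y p < ⊤ → y = x) : ∃ q, q ∈ f x := by
  obtain ⟨q, hq, hmin⟩ := Set.exists_min_image
    {q | r x q < ⊤ ∧ ∀ j < cat x, ¬ CriticalJob (Gedge cat f j) q} (r x) (Set.toFinite _)
    ⟨p, hpr, fun j hj => not_critical_private hf hp hj⟩
  exact ⟨q, (hf x q).2 ⟨hq.1, hq.2, fun t ht htc => hmin t ⟨ht, htc⟩⟩⟩

/-! ### Promoting unmatched applicants -/

/-- `chain_shift` carried out inside `G_j`, followed by giving the freed job `q` to the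
unmatched applicant `y`. -/
theorem promote_step {A J : Type*} [Fintype A] [DecidableEq J] {r : A → J → ℕ∞}
    {cat : A → ℕ} {f : A → Finset J} (hf : FirstSpec r cat f) (j : ℕ) {N P : A → Option J}
    (hN : IsMatching r N) (hP : IsMatchingOn (Gedge cat f j) P)
    (hNP : ∀ x, (restrictM cat f j N x).isSome → (P x).isSome)
    {y : A} {q : J} (hPq : ∀ x, P x ≠ some q) (hy : N y = none) (hyq : r y q < ⊤) :
    ∃ N', IsMatching r N' ∧ N' y = some q ∧
      ((∀ x, x ≠ y → N' x = N x ∨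
          ∃ p p', N x = some p ∧ p ∈ f x ∧ N' x = some p' ∧ p' ∈ f x) ∨
       ∃ z, z ≠ y ∧ N' z = none ∧ (∀ p, N z = some p → cat z ≤ j → p ∉ f z) ∧
        (∀ x, x ≠ y → x ≠ z → N' x = N x ∨
          ∃ p p', N x = some p ∧ p ∈ f x ∧ N' x = some p' ∧ p' ∈ f x) ∧
        ∀ x p, N' x = some p → ∃ v, N v = some p) := by
  classical
  obtain ⟨N₁, hinj, hq, hor⟩ := chain_shift (fun x => (restrictM cat f j N x).isSome) N hN.2 _
    P q rfl hP.2 (fun x hx => Option.isSome_iff_exists.1 (hNP x hx)) hPq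
  have hself : Function.update N₁ y (some q) y = some q := by simp
  have hoth : ∀ x, x ≠ y → Function.update N₁ y (some q) x = N₁ x :=
    fun x hx => Function.update_of_ne hx _ _
  have key : ∀ x, (N₁ x = N x ∨ ((restrictM cat f j N x).isSome ∧ N₁ x = P x)) →
      (N₁ x = N x ∨ ∃ p p', N x = some p ∧ p ∈ f x ∧ N₁ x = some p' ∧ p' ∈ f x) := by
    rintro x (h | ⟨hc, h⟩)
    · exact Or.inl h
    · obtain ⟨p', hp'⟩ := Option.isSome_iff_exists.1 (hNP x hc)
      obtain ⟨p, hp, -, hpf⟩ := restrictM_isSome.1 hc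
      exact Or.inr ⟨p, p', hp, hpf, h.trans hp', (hP.1 _ _ hp').2⟩
  have valid : ∀ x, (N₁ x = N x ∨
      ∃ p p', N x = some p ∧ p ∈ f x ∧ N₁ x = some p' ∧ p' ∈ f x) →
      ∀ p, N₁ x = some p → r x p < ⊤ := by
    rintro x (h | ⟨p, p', -, -, h, h'⟩) t ht
    · exact hN.1 x t (h ▸ ht)
    · rw [h] at ht; cases ht; exact ((hf x p').1 h').1
  refine ⟨Function.update N₁ y (some q), ⟨fun x p hx => ?_, hinj.update_some y q hq⟩, hself, ?_⟩
  · by_cases hxy : x = y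
    · subst hxy; rw [hself] at hx; cases hx; exact hyq
    rw [hoth x hxy] at hx
    rcases hor with h | ⟨z, -, -, hz, h, -⟩
    · exact valid x (key x (h x)) p hx
    · by_cases hxz : x = z
      · subst hxz; simp [hz] at hx
      · exact valid x (key x (h x hxz)) p hx
  · rcases hor with h | ⟨z, hcov, hNz, hz, h, hjobs, hqN⟩
    · left
      intro x hxy
      rw [hoth x hxy]; exact key x (h x)
    · right
      have hzy : z ≠ y := by rintro rfl; exact hNz hy
      refine ⟨z, hzy, by rw [hoth z hzy, hz], fun p hp hc hpf =>
        hcov (restrictM_isSome.2 ⟨p, hp, hc, hpf⟩), fun x hxy hxz => ?_, fun x p hx => ?_⟩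
      · rw [hoth x hxy]; exact key x (h x hxz)
      · by_cases hxy : x = y
        · subst hxy; rw [hself] at hx; rw [← hx]; exact hqN
        · rw [hoth x hxy] at hx; exact hjobs x p hx

theorem mrank_eq_of_step {A J : Type*} [Fintype A] {r : A → J → ℕ∞}
    {cat : A → ℕ} {f : A → Finset J} (hf : FirstSpec r cat f) {N N' : A → Option J} {x : A}
    (h : N' x = N x ∨ ∃ p p', N x = some p ∧ p ∈ f x ∧ N' x = some p' ∧ p' ∈ f x) :
    mrank r N' x = mrank r N x := by
  rcases h with h | ⟨p, p', h1, h2, h3, h4⟩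
  · exact mrank_congr h
  · rw [mrank_some h1, mrank_some h3, hf.rank_eq h2 h4]

/-- The repair argument. In `N` the applicant `y`, who holds no `f`-job in `M`, is unmatched,
everybody else is at least as well off as in `M`, and `x₀` is strictly better off. Giving `y`
an `f`-job costs at most one applicant `z` its job. If `z` has smaller category than `y`, then
`z` holds no `f`-job in `M` and takes over the role of `y`. Otherwise `z` weighs at most as
much as `y`, and a second gainer tips the balance; if `z = x₀` is the only other gainer,
then `x₀` gets back its job of `M`, which is still free. -/
theorem exists_morePopular_of_unmatched {A J : Type*} [Fintype A] [Finite J] [DecidableEq J]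
    (r : A → J → ℕ∞) (cat : A → ℕ) (w : A → ℚ) (f : A → Finset J)
    (hcat : ∀ x, 1 ≤ cat x) (hpos : ∀ x, 0 < w x)
    (hw : ∀ x y, cat x ≤ cat y → w y ≤ w x)
    (hf : FirstSpec r cat f) (hne : ∀ x, ∃ q, q ∈ f x)
    (M : A → Option J) (hM : IsMatching r M) (i : ℕ)
    (hmax : ∀ j < i, IsMaxMatchingOn (Gedge cat f j) (restrictM cat f j M))
    (x₀ : A) (hx₀ : i ≤ cat x₀) (n : ℕ) : ∀ (N : A → Option J) (y : A), cat y = n →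
    cat y ≤ i → IsMatching r N → N y = none → (∀ p, M y = some p → p ∉ f y) →
    (∀ x, x ≠ y → mrank r N x ≤ mrank r M x) →
    (∀ x, cat x ≤ i → ∀ p, M x = some p → p ∈ f x → ∃ p', N x = some p' ∧ p' ∈ f x) →
    x₀ ≠ y → mrank r N x₀ < mrank r M x₀ →
    ((∃ x₁, x₁ ≠ x₀ ∧ x₁ ≠ y ∧ mrank r N x₁ < mrank r M x₁) ∨
      ∀ p, M x₀ = some p → ∀ v, N v ≠ some p) →
    ∃ N', IsMatching r N' ∧ MorePopular r w N' M := by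
  classical
  induction n using Nat.strong_induction_on with
  | _ n ih =>
    intro N y hcy hyi hN hNy hMy hweak hkeep hx₀y hgain hextra
    obtain ⟨q, hq⟩ := hne y
    have hq' := (hf y q).1 hq
    have hylt : r y q < mrank r M y :=
      hf.rank_lt hM (fun j hj => hmax j (hj.trans_le hyi)) hMy hq
    have hcy1 := hcat y
    obtain ⟨L, hL, hLq⟩ : ∃ L, IsMaxMatchingOn (Gedge cat f (cat y - 1)) L ∧
        ∀ x, L x ≠ some q := by
      have := hq'.2.1 (cat y - 1) (by omega)
      unfold CriticalJob at this
      push Not at this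
      exact this
    obtain ⟨P, hP, hcov, hPL⟩ := exists_maxMatching_cover
      (restrictM_isMatchingOn cat f (cat y - 1) hN.2) hL
    obtain ⟨N', hN', hN'y, hor⟩ := promote_step hf (cat y - 1) hN hP.1 hcov
      (y := y) (q := q) (fun x hx => by
        obtain ⟨v, hv⟩ := hPL x q hx
        exact hLq v hv) hNy hq'.1
    have hygain : mrank r N' y < mrank r M y := by rw [mrank_some hN'y]; exact hylt
    rcases hor with h | ⟨z, hzy, hN'z, hzf, h, hjobs⟩
    · refine ⟨N', hN', morePopular_of_sets r w (fun x => (hpos x).le) N' M {y} ∅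
        (fun x _ => ?_) (fun x hx => ?_) (by simpa using hpos y)⟩
      · by_cases hxy : x = y
        · subst hxy; exact hygain.le
        · rw [mrank_eq_of_step hf (h x hxy)]; exact hweak x hxy
      · rw [Finset.mem_singleton.1 hx]; exact hygain
    have hrank : ∀ x, x ≠ y → x ≠ z → mrank r N' x = mrank r N x :=
      fun x hxy hxz => mrank_eq_of_step hf (h x hxy hxz)
    have hweak' : ∀ x, x ≠ z → mrank r N' x ≤ mrank r M x := by
      intro x hxz
      by_cases hxy : x = y
      · subst hxy; exact hygain.le
      · rw [hrank x hxy hxz]; exact hweak x hxy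
    by_cases hcz : cat z < cat y
    · have hMz : ∀ p, M z = some p → p ∉ f z := by
        intro p hp hpf
        obtain ⟨p', h1, h2⟩ := hkeep z (by omega) p hp hpf
        exact hzf p' h1 (by omega) h2
      have hx₀z : x₀ ≠ z := by rintro rfl; omega
      refine ih (cat z) (by omega) N' z rfl (by omega) hN' hN'z hMz hweak' ?_ hx₀z
        (by rw [hrank x₀ hx₀y hx₀z]; exact hgain) (Or.inl ⟨y, hx₀y.symm, hzy.symm, hygain⟩)
      intro x hxi p hp hpf
      by_cases hxy : x = y
      · subst hxy; exact absurd hpf (hMy p hp)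
      have hxz : x ≠ z := by rintro rfl; exact hMz p hp hpf
      rcases h x hxy hxz with h | ⟨-, p', -, -, h3, h4⟩
      · rw [h]; exact hkeep x hxi p hp hpf
      · exact ⟨p', h3, h4⟩
    · have hwz : w z ≤ w y := hw y z (not_lt.1 hcz)
      have fin : ∀ g, g ≠ y → g ≠ z → mrank r N g < mrank r M g →
          ∃ N', IsMatching r N' ∧ MorePopular r w N' M := by
        intro g hgy hgz hg
        refine ⟨N', hN', morePopular_of_sets r w (fun x => (hpos x).le) N' M {y, g} {z}
          (fun x hx => hweak' x (by simpa using hx)) (fun x hx => ?_) ?_⟩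
        · rcases Finset.mem_insert.1 hx with rfl | hx
          · exact hygain
          · rw [Finset.mem_singleton.1 hx, hrank g hgy hgz]; exact hg
        · rw [Finset.sum_singleton, Finset.sum_pair hgy.symm]
          have := hpos g
          linarith
      by_cases hx₀z : x₀ = z
      swap
      · exact fin x₀ hx₀y hx₀z hgain
      subst hx₀z
      rcases hextra with ⟨x₁, h1, h2, h3⟩ | hfree
      · exact fin x₁ h2 h1 h3
      -- Here `x₀` is evicted and nobody else is known to gain besides `y`.
      have hself : Function.update N' x₀ (M x₀) x₀ = M x₀ := by simp
      have hoth : ∀ x, x ≠ x₀ → Function.update N' x₀ (M x₀) x = N' x :=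
        fun x hx => Function.update_of_ne hx _ _
      refine ⟨Function.update N' x₀ (M x₀), ⟨fun x p hx => ?_, ?_⟩,
        morePopular_of_sets r w (fun x => (hpos x).le) _ M {y} ∅
        (fun x _ => ?_) (fun x hx => ?_) (by simpa using hpos y)⟩
      · by_cases hxx : x = x₀
        · subst hxx; rw [hself] at hx; exact hM.1 _ _ hx
        · rw [hoth x hxx] at hx; exact hN'.1 _ _ hx
      · cases hMx : M x₀ with
        | none => exact JobInj.update_none hN'.2 x₀
        | some p =>
          refine JobInj.update_some hN'.2 x₀ p fun x hx => ?_
          obtain ⟨v, hv⟩ := hjobs x p hx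
          exact hfree p hMx v hv
      · by_cases hxx : x = x₀
        · subst hxx; rw [mrank_congr hself]
        · rw [mrank_congr (hoth x hxx)]; exact hweak' x hxx
      · rw [Finset.mem_singleton.1 hx, mrank_congr (hoth y hx₀y.symm)]; exact hygain

/-- Let the restrictions of `M` to all graphs before `G_i` be maximum, and let `x₀`, of category
`i` and holding no `f`-job in `M`, prefer a job `q` to its present one. If some matching `P` of
`G_i` leaves `q` free and serves everyone served by the restriction of `M` to `G_i`, then some
matching is more popular than `M`. -/
theorem exists_morePopular_of_free_job {A J : Type*} [Fintype A] [Finite J] [DecidableEq J]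
    (r : A → J → ℕ∞) (cat : A → ℕ) (w : A → ℚ) (f : A → Finset J)
    (hcat : ∀ x, 1 ≤ cat x) (hpos : ∀ x, 0 < w x)
    (hw : ∀ x y, cat x ≤ cat y → w y ≤ w x)
    (hwlt : ∀ x y, cat x < cat y → w y < w x)
    (hf : FirstSpec r cat f) (hne : ∀ x, ∃ q, q ∈ f x)
    (M : A → Option J) (hM : IsMatching r M) (i : ℕ)
    (hmax : ∀ j < i, IsMaxMatchingOn (Gedge cat f j) (restrictM cat f j M))
    (x₀ : A) (hx₀ : cat x₀ = i) (hMx₀ : ∀ p, M x₀ = some p → p ∉ f x₀)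
    (P : A → Option J) (hP : IsMatchingOn (Gedge cat f i) P)
    (hMP : ∀ x, (restrictM cat f i M x).isSome → (P x).isSome)
    (q : J) (hPq : ∀ x, P x ≠ some q) (hq : r x₀ q < mrank r M x₀) :
    ∃ N', IsMatching r N' ∧ MorePopular r w N' M := by
  classical
  set N := Function.update M x₀ none with hNdef
  have hself : N x₀ = none := by simp [hNdef]
  have hoth : ∀ x, x ≠ x₀ → N x = M x := fun x hx => Function.update_of_ne hx _ _
  have hNM : ∀ x p, N x = some p → x ≠ x₀ ∧ M x = some p := by
    intro x p hx
    have : x ≠ x₀ := by rintro rfl; simp [hself] at hx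
    exact ⟨this, hoth x this ▸ hx⟩
  have hN : IsMatching r N :=
    ⟨fun x p hx => hM.1 _ _ (hNM x p hx).2, JobInj.update_none hM.2 x₀⟩
  obtain ⟨N', hN', hN'x, hor⟩ := promote_step hf i hN hP (fun x hx => hMP x (by
      obtain ⟨p, h1, h2⟩ := restrictM_isSome.1 hx
      exact restrictM_isSome.2 ⟨p, (hNM x p h1).2, h2⟩)) hPq hself (hq.trans_le le_top)
  have hgain : mrank r N' x₀ < mrank r M x₀ := by rw [mrank_some hN'x]; exact hq
  rcases hor with h | ⟨z, hz, hN'z, hzf, h, hjobs⟩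
  · refine ⟨N', hN', morePopular_of_sets r w (fun x => (hpos x).le) N' M {x₀} ∅
      (fun x _ => ?_) (fun x hx => ?_) (by simpa using hpos x₀)⟩
    · by_cases hxx : x = x₀
      · subst hxx; exact hgain.le
      · rw [mrank_eq_of_step hf (h x hxx), mrank_congr (hoth x hxx)]
    · rw [Finset.mem_singleton.1 hx]; exact hgain
  have hweak : ∀ x, x ≠ z → mrank r N' x ≤ mrank r M x := by
    intro x hxz
    by_cases hxx : x = x₀
    · subst hxx; exact hgain.le
    · rw [mrank_eq_of_step hf (h x hxx hxz), mrank_congr (hoth x hxx)]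
  by_cases hcz : i < cat z
  · refine ⟨N', hN', morePopular_of_sets r w (fun x => (hpos x).le) N' M {x₀} {z}
      (fun x hx => hweak x (by simpa using hx)) (fun x hx => ?_) ?_⟩
    · rw [Finset.mem_singleton.1 hx]; exact hgain
    · simpa using hwlt x₀ z (hx₀ ▸ hcz)
  · have hMz : ∀ p, M z = some p → p ∉ f z := fun p hp =>
      hzf p ((hoth z hz).trans hp) (not_lt.1 hcz)
    refine exists_morePopular_of_unmatched r cat w f hcat hpos hw hf hne M hM i hmax x₀ hx₀.ge
      _ N' z rfl (not_lt.1 hcz) hN' hN'z hMz hweak ?_ hz.symm hgain (Or.inr ?_)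
    · intro x _ p hp hpf
      have hxx : x ≠ x₀ := by rintro rfl; exact hMx₀ p hp hpf
      have hxz : x ≠ z := by rintro rfl; exact hMz p hp hpf
      rcases h x hxx hxz with h | ⟨-, p', -, -, h3, h4⟩
      · exact ⟨p, by rw [h, hoth x hxx, hp], hpf⟩
      · exact ⟨p', h3, h4⟩
    · intro p hp v hv
      obtain ⟨u, hu⟩ := hjobs v p hv
      obtain ⟨h1, h2⟩ := hNM u p hu
      exact h1 (hM.2 _ _ _ h2 hp)

/-- If the restrictions of `M` to all earlier graphs are maximum but the one to `G_i` is not,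
then an applicant of category exactly `i` can be added to those served by `M` in `G_i`: one of
smaller category could already have been added in an earlier graph. -/
theorem exists_augmentation {A J : Type*} [Fintype A] [Finite J] [DecidableEq J]
    (cat : A → ℕ) (f : A → Finset J)
    (M : A → Option J) (hM : JobInj M) (i : ℕ)
    (hmax : ∀ j < i, IsMaxMatchingOn (Gedge cat f j) (restrictM cat f j M))
    (hnot : ¬ IsMaxMatchingOn (Gedge cat f i) (restrictM cat f i M)) :
    ∃ P x₀, IsMatchingOn (Gedge cat f i) P ∧
      (∀ x, (restrictM cat f i M x).isSome → (P x).isSome) ∧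
      cat x₀ = i ∧ (∀ p, M x₀ = some p → p ∉ f x₀) ∧ (P x₀).isSome := by
  classical
  obtain ⟨L, hL⟩ := exists_maxMatching (Gedge cat f i)
  obtain ⟨P, hP, hcov, -⟩ := exists_maxMatching_cover (restrictM_isMatchingOn cat f i hM) hL
  obtain ⟨x₀, hx₀, hx₀'⟩ : ∃ x, (P x).isSome ∧ ¬ (restrictM cat f i M x).isSome := by
    by_contra hno
    push Not at hno
    refine hnot ⟨restrictM_isMatchingOn cat f i hM, fun M' hM' => (hP.2 M' hM').trans ?_⟩
    exact Finset.card_le_card fun x hx => by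
      simp only [Finset.mem_filter, Finset.mem_univ, true_and] at hx ⊢
      exact hno x hx
  obtain ⟨q, hq⟩ := Option.isSome_iff_exists.1 hx₀
  have hE := hP.1.1 _ _ hq
  have hMx₀ : ∀ p, M x₀ = some p → p ∉ f x₀ := fun p hp hpf =>
    hx₀' (restrictM_isSome.2 ⟨p, hp, hE.1, hpf⟩)
  refine ⟨P, x₀, hP.1, hcov, ?_, hMx₀, hx₀⟩
  by_contra hlt
  have hlt : cat x₀ < i := lt_of_le_of_ne hE.1 hlt
  have := (hmax _ hlt).2 _ (restrictM_isMatchingOn cat f (cat x₀) hP.1.2)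
  refine absurd this (not_le.2 (Finset.card_lt_card ?_))
  rw [Finset.ssubset_iff_of_subset]
  · refine ⟨x₀, ?_, ?_⟩
    · simp only [Finset.mem_filter, Finset.mem_univ, true_and]
      exact restrictM_isSome.2 ⟨q, hq, le_rfl, hE.2⟩
    · simp only [Finset.mem_filter, Finset.mem_univ, true_and]
      rintro h
      obtain ⟨p, h1, -, h3⟩ := restrictM_isSome.1 h
      exact hMx₀ p h1 h3
  · intro x hx
    simp only [Finset.mem_filter, Finset.mem_univ, true_and] at hx ⊢
    obtain ⟨p, h1, h2, h3⟩ := restrictM_isSome.1 hx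
    obtain ⟨t, ht⟩ := Option.isSome_iff_exists.1
      (hcov x (restrictM_isSome.2 ⟨p, h1, h2.trans hE.1, h3⟩))
    exact restrictM_isSome.2 ⟨t, ht, h2, (hP.1.1 _ _ ht).2⟩

/-- With ties, every popular matching is well-formed: each
restriction `M ∩ E[G_i]` is a maximum matching of `G_i` (`1 ≤ i ≤ k`), and every
applicant is matched to a job in `f x ∪ s x`. -/
theorem popular_isWellFormed_ties
    {A J : Type*} [Fintype A] [Fintype J] [DecidableEq J]
    (k : ℕ) (r : A → J → ℕ∞) (cat : A → ℕ) (wt : ℕ → ℚ)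
    (f : A → Finset J) (s : A → Finset J) (l : A → J)
    (hcat : ∀ x, 1 ≤ cat x ∧ cat x ≤ k)
    (hw : ∀ i j, 1 ≤ i → i < j → j ≤ k → wt j < wt i)
    (hwpos : ∀ i, 1 ≤ i → i ≤ k → 0 < wt i)
    (hlast : ∀ x, r x (l x) < ⊤ ∧ (∀ p, r x p < ⊤ → p ≠ l x → r x p < r x (l x)) ∧
      ∀ y, r y (l x) < ⊤ → y = x)
    (hfirst : ∀ x p, p ∈ f x ↔
      r x p < ⊤ ∧ (∀ j < cat x, ¬ CriticalJob (Gedge cat f j) p) ∧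
      ∀ q, r x q < ⊤ → (∀ j < cat x, ¬ CriticalJob (Gedge cat f j) q) → r x p ≤ r x q)
    (hsecond : ∀ x,
      (CriticalApp (Gedge cat f (cat x)) x → s x = ∅) ∧
      (¬ CriticalApp (Gedge cat f (cat x)) x → ∀ p, p ∈ s x ↔
        r x p < ⊤ ∧ (∀ j ≤ cat x, ¬ CriticalJob (Gedge cat f j) p) ∧
        ∀ q, r x q < ⊤ → (∀ j ≤ cat x, ¬ CriticalJob (Gedge cat f j) q) → r x p ≤ r x q))
    (M : A → Option J) (hpop : Popular r (fun z => wt (cat z)) M) :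
    (∀ i, 1 ≤ i → i ≤ k →
        IsMaxMatchingOn (Gedge cat f i) (restrictM cat f i M)) ∧
    ∀ x, ∃ p, M x = some p ∧ (p ∈ f x ∨ p ∈ s x) := by
  classical
  obtain ⟨hM, hbest⟩ := hpop
  have hf : FirstSpec r cat f := hfirst
  have hcat1 : ∀ x, 1 ≤ cat x := fun x => (hcat x).1
  have hpos : ∀ x, 0 < wt (cat x) := fun x => hwpos _ (hcat x).1 (hcat x).2
  have hwlt : ∀ x y, cat x < cat y → wt (cat y) < wt (cat x) := fun x y h =>
    hw _ _ (hcat x).1 h (hcat y).2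
  have hwle : ∀ x y, cat x ≤ cat y → wt (cat y) ≤ wt (cat x) := fun x y h => by
    rcases h.lt_or_eq with h | h
    · exact (hwlt x y h).le
    · rw [h]
  have hne : ∀ x, ∃ q, q ∈ f x := fun x => hf.nonempty (hlast x).1 (hlast x).2.2
  have hmax : ∀ i, IsMaxMatchingOn (Gedge cat f i) (restrictM cat f i M) := by
    intro i
    induction i using Nat.strong_induction_on with
    | _ i ih =>
      by_contra hnot
      obtain ⟨P, x₀, hP, hcov, hx₀, hMx₀, hPx₀⟩ :=
        exists_augmentation cat f M hM.2 i ih hnot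
      obtain ⟨q, hq⟩ := Option.isSome_iff_exists.1 hPx₀
      have hqf := (hP.1 _ _ hq).2
      -- Dropping `x₀` from `P` frees `q` and still serves the applicants served by `M`.
      obtain ⟨N', h1, h2⟩ := exists_morePopular_of_free_job r cat (fun z => wt (cat z)) f hcat1
        hpos hwle hwlt hf hne M hM i ih x₀ hx₀ hMx₀ (Function.update P x₀ none)
        ⟨fun x p hx => by
          by_cases h : x = x₀
          · subst h; simp at hx
          · rw [Function.update_of_ne h] at hx; exact hP.1 _ _ hx,
          JobInj.update_none hP.2 x₀⟩
        (fun x hx => by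
          have h : x ≠ x₀ := by
            rintro rfl
            obtain ⟨p, h1, -, h3⟩ := restrictM_isSome.1 hx
            exact hMx₀ p h1 h3
          rw [Function.update_of_ne h]; exact hcov x hx)
        q (fun x hx => by
          by_cases h : x = x₀
          · subst h; simp at hx
          · rw [Function.update_of_ne h] at hx; exact h (hP.2 _ _ _ hx hq))
        (hf.rank_lt hM (fun j hj => ih j (hx₀ ▸ hj)) hMx₀ hqf)
      exact hbest N' h1 h2
  refine ⟨fun i _ _ => hmax i, fun x => ?_⟩
  by_contra hno
  push Not at hno
  have hMx : ∀ p, M x = some p → p ∉ f x := fun p hp => (hno p hp).1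
  have hncx : ¬ CriticalApp (Gedge cat f (cat x)) x := by
    intro hc
    obtain ⟨p, h1, -, h3⟩ := restrictM_isSome.1 (hc _ (hmax _))
    exact hMx p h1 h3
  have hs := (hsecond x).2 hncx
  -- The last resort of `x` can be covered in `G_j` only by `x`, which `M` leaves uncovered.
  have hl : ∀ j ≤ cat x, ¬ CriticalJob (Gedge cat f j) (l x) := by
    intro j _ hc
    obtain ⟨y, hy⟩ := hc _ (hmax j)
    obtain ⟨h1, -, h3⟩ := restrictM_eq_some.1 hy
    have := (hlast x).2.2 y (hM.1 _ _ h1)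
    subst this
    exact hMx _ h1 h3
  obtain ⟨q, hq, hmin⟩ := Set.exists_min_image
    {q | r x q < ⊤ ∧ ∀ j ≤ cat x, ¬ CriticalJob (Gedge cat f j) q} (r x) (Set.toFinite _)
    ⟨l x, (hlast x).1, hl⟩
  have hlt : r x q < mrank r M x := by
    cases h : M x with
    | none => simpa [mrank, h] using hq.1
    | some p =>
      rw [mrank_some h]
      by_contra hle
      exact (hno p h).2 ((hs p).2 ⟨hM.1 _ _ h, fun j _ hc =>
        hMx p h (mem_f_of_critical hM.2 (hmax j) h hc), fun t ht htc =>
        (not_lt.1 hle).trans (hmin t ⟨ht, htc⟩)⟩)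
  obtain ⟨L, hL, hLq⟩ : ∃ L, IsMaxMatchingOn (Gedge cat f (cat x)) L ∧
      ∀ y, L y ≠ some q := by
    have := hq.2 (cat x) le_rfl
    unfold CriticalJob at this
    push Not at this
    exact this
  obtain ⟨P, hP, hcov, hPL⟩ := exists_maxMatching_cover
    (restrictM_isMatchingOn cat f (cat x) hM.2) hL
  obtain ⟨N', h1, h2⟩ := exists_morePopular_of_free_job r cat (fun z => wt (cat z)) f hcat1
    hpos hwle hwlt hf hne M hM (cat x) (fun j _ => hmax j) x rfl hMx P hP.1 hcov q
    (fun y hy => by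
      obtain ⟨v, hv⟩ := hPL y q hy
      exact hLq v hv) hlt
  exact hbest N' h1 h2
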